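/- arXiv:1902.11031 — 5 statements merged into one kernel-verified Lean document; each statement's English description precedes it below -/
import Mathlib

section
/- Let k ≥ 2 and let y₁, …, y_k be nonnegative real numbers. Assume that for some N with 1 ≤ N < k one has y₁ + ⋯ + y_N = y_{N+1} + ⋯ + y_k. Then there exist a natural number l < k, nonnegative real numbers x₁, …, x_l each lying in the ℚ-linear span of {y₁, …, y_k}, and natural numbers Z_{ij} (1 ≤ i ≤ k, 1 ≤ j ≤ l) such that y_i = ∑_{j=1}^{l} Z_{ij}·x_j for every i = 1, …, k. -/
/-!
North-west corner rule: let `∑ a = ∑ b`, and pick `s` in `a` and `t` in `b` with, say, `s ≤ t`.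
Take `s` as a generator, delete it from `a` and replace `t` by `t - s` in `b`. The two sums stay
equal, and one entry is traded for one generator. Since `t - s` is kept even when it vanishes, the
two sides never become empty together; once one is, the other consists of zeros, which need no
generator, so at least one generator is saved. Only differences of entries are formed, so everything
stays in the nonnegative part of the group they generate.
-/

section Refinement

open AddSubmonoid

theorem forall_mem_closure_range_cons {M : Type*} [AddMonoid M] {n : ℕ} {x : Fin n → M} {s d : M}
    {c : Multiset M} (hc : ∀ z ∈ d ::ₘ c, z ∈ closure (Set.range x)) :
    ∀ z ∈ s ::ₘ (s + d) ::ₘ c, z ∈ closure (Set.range (Fin.cons s x : Fin (n + 1) → M)) := by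
  rw [Fin.range_cons]
  have hs : s ∈ closure (insert s (Set.range x)) := mem_closure_of_mem (Set.mem_insert _ _)
  have hmono : closure (Set.range x) ≤ closure (insert s (Set.range x)) :=
    closure_mono (Set.subset_insert _ _)
  simp only [Multiset.forall_mem_cons] at hc ⊢
  exact ⟨hs, add_mem hs (hmono hc.1), fun z hz ↦ hmono (hc.2 z hz)⟩

variable {M : Type*} [AddCommMonoid M] [LinearOrder M] [IsOrderedCancelAddMonoid M]
  [CanonicallyOrderedAdd M]

theorem exists_forall_mem_closure_range_of_sum_eq_sum {n : ℕ} {a b : Multiset M}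
    (hcard : (a + b).card = n + 1) (hsum : a.sum = b.sum) :
    ∃ x : Fin n → M, ∀ z ∈ a + b, z ∈ closure (Set.range x) := by
  rcases a.empty_or_exists_mem with rfl | ⟨s, hs⟩
  · have hb : ∀ z ∈ b, z = 0 := Multiset.sum_eq_zero_iff.1 hsum.symm
    exact ⟨0, fun z hz ↦ hb z (by simpa only [zero_add] using hz) ▸ zero_mem _⟩
  rcases b.empty_or_exists_mem with rfl | ⟨t, ht⟩
  · have ha : ∀ z ∈ a, z = 0 := Multiset.sum_eq_zero_iff.1 hsum
    exact ⟨0, fun z hz ↦ ha z (by simpa only [add_zero] using hz) ▸ zero_mem _⟩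
  wlog hst : s ≤ t generalizing a b s t
  · simpa only [add_comm b a] using
      this (add_comm a b ▸ hcard) hsum.symm t ht s hs (le_of_not_ge hst)
  obtain ⟨a, rfl⟩ := Multiset.exists_cons_of_mem hs
  obtain ⟨b, rfl⟩ := Multiset.exists_cons_of_mem ht
  obtain ⟨d, rfl⟩ := exists_add_of_le hst
  cases n with
  | zero => simp at hcard
  | succ n =>
    obtain ⟨x, hx⟩ := exists_forall_mem_closure_range_of_sum_eq_sum (n := n) (a := a) (b := d ::ₘ b)
      (by simpa [← add_assoc] using hcard)
      (by simpa only [Multiset.sum_cons, add_assoc, add_right_inj] using hsum)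
    rw [Multiset.add_cons] at hx
    refine ⟨Fin.cons s x, ?_⟩
    rw [Multiset.cons_add, Multiset.add_cons]
    exact forall_mem_closure_range_cons hx

theorem exists_eq_sum_nsmul_of_sum_eq_sum_compl {ι : Type*} [Fintype ι] [DecidableEq ι]
    [Nonempty ι] (y : ι → M) (s : Finset ι) (hsum : ∑ i ∈ s, y i = ∑ i ∈ sᶜ, y i) :
    ∃ l < Fintype.card ι, ∃ (x : Fin l → M) (Z : ι → Fin l → ℕ), ∀ i, y i = ∑ j, Z i j • x j := by
  obtain ⟨n, hn⟩ := Nat.exists_eq_succ_of_ne_zero (Fintype.card_ne_zero (α := ι))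
  have hcard : (s.val.map y + sᶜ.val.map y).card = n + 1 := by
    simp only [Multiset.card_add, Multiset.card_map, Finset.card_val, s.card_add_card_compl, hn]
  obtain ⟨x, hx⟩ := exists_forall_mem_closure_range_of_sum_eq_sum hcard hsum
  have hy (i : ι) : ∃ c : Fin n → ℕ, y i = ∑ j, c j • x j := by
    refine mem_closure_range_iff_of_fintype.1 (hx _ ?_)
    rw [← Multiset.map_add]
    exact Multiset.mem_map_of_mem y (by simpa using em (i ∈ s))
  choose Z hZ using hy
  exact ⟨n, by omega, x, Z, hZ⟩

end Refinement

theorem addSubgroup_closure_le_span (R : Type*) {V : Type*} [Ring R] [AddCommGroup V] [Module R V]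
    {s : Set V} : AddSubgroup.closure s ≤ (Submodule.span R s).toAddSubgroup :=
  (AddSubgroup.closure_le _).2 Submodule.subset_span

section OrderedGroup

variable {G : Type*} [AddCommGroup G]

instance canonicallyOrderedAdd_nonneg [PartialOrder G] [IsOrderedAddMonoid G] :
    CanonicallyOrderedAdd {z : G // 0 ≤ z} where
  le_add_self _ b := le_add_of_nonneg_left b.2
  le_self_add _ b := le_add_of_nonneg_right b.2
  exists_add_of_le {a b} hab :=
    ⟨⟨b - a, sub_nonneg.2 hab⟩, Subtype.ext (add_sub_cancel _ _).symm⟩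

theorem stmt_0_general [LinearOrder G] [IsOrderedAddMonoid G] {ι : Type*} [Fintype ι]
    [DecidableEq ι] [Nonempty ι] (y : ι → G) (hy : ∀ i, 0 ≤ y i) (s : Finset ι)
    (hsum : ∑ i ∈ s, y i = ∑ i ∈ sᶜ, y i) :
    ∃ l < Fintype.card ι, ∃ (x : Fin l → G) (Z : ι → Fin l → ℕ),
      (∀ j, 0 ≤ x j ∧ x j ∈ AddSubgroup.closure (Set.range y)) ∧
      (∀ i, y i = ∑ j, Z i j • x j) := by
  let H := AddSubgroup.closure (Set.range y)
  let φ : {z : H // 0 ≤ z} →+ G := H.subtype.comp Nonneg.coeAddMonoidHom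
  have hφ : Function.Injective φ := H.subtype_injective.comp Subtype.coe_injective
  let y' (i : ι) : {z : H // 0 ≤ z} := ⟨⟨y i, AddSubgroup.subset_closure ⟨i, rfl⟩⟩, hy i⟩
  have hφy (i : ι) : φ (y' i) = y i := rfl
  have hsum' : ∑ i ∈ s, y' i = ∑ i ∈ sᶜ, y' i := hφ (by simpa only [map_sum, hφy] using hsum)
  obtain ⟨l, hl, x, Z, hZ⟩ := exists_eq_sum_nsmul_of_sum_eq_sum_compl y' s hsum'
  refine ⟨l, hl, fun j ↦ φ (x j), Z, fun j ↦ ⟨(x j).2, (x j).1.2⟩, fun i ↦ ?_⟩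
  simpa only [map_sum, map_nsmul, hφy] using congrArg φ (hZ i)

end OrderedGroup

/-- Let k ≥ 2 and let y₁, …, y_k be nonnegative real numbers. Assume that for
some N with 1 ≤ N < k one has y₁ + ⋯ + y_N = y_{N+1} + ⋯ + y_k. Then there exist a natural
number l < k, nonnegative real numbers x₁, …, x_l each lying in the ℚ-linear span of
{y₁, …, y_k}, and natural numbers Z_{ij} such that y_i = ∑_{j} Z_{ij}·x_j for every i. -/
theorem stmt_0 (k : ℕ) (hk : 2 ≤ k) (y : Fin k → ℝ) (hy : ∀ i, 0 ≤ y i)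
    (N : ℕ) (hN1 : 1 ≤ N) (hNk : N < k)
    (hsum : ∑ i ∈ Finset.univ.filter (fun i : Fin k => (i : ℕ) < N), y i
          = ∑ i ∈ Finset.univ.filter (fun i : Fin k => N ≤ (i : ℕ)), y i) :
    ∃ l : ℕ, l < k ∧ ∃ (x : Fin l → ℝ) (Z : Fin k → Fin l → ℕ),
      (∀ j, 0 ≤ x j ∧ x j ∈ Submodule.span ℚ (Set.range y)) ∧
      (∀ i, y i = ∑ j, (Z i j : ℝ) * x j) := by
  have : NeZero k := ⟨by omega⟩
  obtain ⟨l, hl, x, Z, hx, hZ⟩ := stmt_0_general y hy (Finset.univ.filter fun i ↦ (i : ℕ) < N)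
    (by simpa only [Finset.compl_filter, not_lt] using hsum)
  exact ⟨l, by simpa using hl, x, Z,
    fun j ↦ (hx j).imp_right fun h ↦ addSubgroup_closure_le_span ℚ h, by simpa using hZ⟩
end

section
/- Let y₁, …, y_k be nonnegative real numbers. Then there exist a natural number n and real numbers x₁, …, x_n such that: each x_j is nonnegative and lies in the ℚ-linear span of {y₁, …, y_k}; the family x₁, …, x_n is linearly independent over ℚ; and every y_i is a nonnegative integer combination of x₁, …, x_n. -/
/-!
A family `x` of nonnegative elements that satisfies a nontrivial relation `∑ j, q j • x j = 0` can
be shortened without shrinking its nonnegative integer combinations. As long as `q` has entries of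
both signs, take `a` and `b` where `q` is minimal and maximal and subtract the smaller of `x a` and
`x b` from the larger: the relation persists with `q a` or `q b` replaced by `q a + q b`, which
lies strictly between the two. So this stops, at a relation with coefficients of one sign. There
every `x j` with a nonzero coefficient vanishes and can be dropped. Repeating this ends at a
linearly independent family.
-/

open Finset Function

section SignInduction

variable {ι : Type*} [DecidableEq ι]

theorem ncard_setOf_update_lt [Finite ι] {α : Type*} {p : α → Prop} {q : ι → α} {a : ι} {c : α}
    (ha : p (q a)) (hc : ¬ p c) : {j | p (update q a c j)}.ncard < {j | p (q j)}.ncard := by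
  have diff_eq : {j | p (update q a c j)} = {j | p (q j)} \ {a} := by
    ext j
    rcases eq_or_ne j a with rfl | hj <;> simp [*]
  rw [diff_eq]
  exact Set.ncard_sdiff_singleton_lt_of_mem ha

theorem sign_induction_of_mem_Icc [Finite ι] {motive : (ι → ℤ) → Prop}
    (nonneg : ∀ q, 0 ≤ q → motive q) (nonpos : ∀ q, q ≤ 0 → motive q)
    (step : ∀ q a b, q a < 0 → 0 < q b → motive (update q a (q a + q b)) →
      motive (update q b (q a + q b)) → motive q)
    (l u : ℤ) (q : ι → ℤ) (hq : ∀ j, q j ∈ Set.Icc l u) : motive q := by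
  rcases le_or_gt 0 l with hl | hl
  · exact nonneg q fun j => hl.trans (hq j).1
  rcases le_or_gt u 0 with hu | hu
  · exact nonpos q fun j => (hq j).2.trans hu
  by_cases hmin : ∀ j, q j ≠ l
  · exact sign_induction_of_mem_Icc nonneg nonpos step (l + 1) u q fun j =>
      ⟨Int.add_one_le_of_lt ((hq j).1.lt_of_ne' (hmin j)), (hq j).2⟩
  by_cases hmax : ∀ j, q j ≠ u
  · exact sign_induction_of_mem_Icc nonneg nonpos step l (u - 1) q fun j =>
      ⟨(hq j).1, Int.le_sub_one_of_lt ((hq j).2.lt_of_ne (hmax j))⟩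
  push Not at hmin hmax
  obtain ⟨a, ha⟩ := hmin
  obtain ⟨b, hb⟩ := hmax
  have sum_mem : q a + q b ∈ Set.Ioo l u := ⟨by lia, by lia⟩
  have update_mem (i j : ι) : update q i (q a + q b) j ∈ Set.Icc l u :=
    (forall_update_iff q fun _ m => m ∈ Set.Icc l u).2
      ⟨Set.Ioo_subset_Icc_self sum_mem, fun j _ => hq j⟩ j
  exact step q a b (ha ▸ hl) (hb ▸ hu)
    (sign_induction_of_mem_Icc nonneg nonpos step l u _ (update_mem a))
    (sign_induction_of_mem_Icc nonneg nonpos step l u _ (update_mem b))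
-- Either the interval shrinks, or one more coefficient moves into its interior.
termination_by ((u - l).toNat, {j | q j ∉ Set.Ioo l u}.ncard)
decreasing_by
  · exact Prod.Lex.left _ _ (by lia)
  · exact Prod.Lex.left _ _ (by lia)
  · exact Prod.Lex.right _ (ncard_setOf_update_lt (p := (· ∉ Set.Ioo l u))
      (ha ▸ Set.left_notMem_Ioo) (not_not.2 sum_mem))
  · exact Prod.Lex.right _ (ncard_setOf_update_lt (p := (· ∉ Set.Ioo l u))
      (hb ▸ Set.right_notMem_Ioo) (not_not.2 sum_mem))

@[elab_as_elim]
theorem sign_induction [Finite ι] {motive : (ι → ℤ) → Prop}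
    (nonneg : ∀ q, 0 ≤ q → motive q) (nonpos : ∀ q, q ≤ 0 → motive q)
    (step : ∀ q a b, q a < 0 → 0 < q b → motive (update q a (q a + q b)) →
      motive (update q b (q a + q b)) → motive q)
    (q : ι → ℤ) : motive q := by
  obtain ⟨l, hl⟩ := (Set.finite_range q).bddBelow
  obtain ⟨u, hu⟩ := (Set.finite_range q).bddAbove
  exact sign_induction_of_mem_Icc nonneg nonpos step l u q fun j => ⟨hl ⟨j, rfl⟩, hu ⟨j, rfl⟩⟩

end SignInduction

theorem sum_update_add_smul_update_sub {ι R M : Type*} [Fintype ι] [DecidableEq ι] [Semiring R]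
    [AddCommGroup M] [Module R M] (q : ι → R) (x : ι → M) {a b : ι} (hab : a ≠ b) :
    ∑ j, update q a (q a + q b) j • update x b (x b - x a) j = ∑ j, q j • x j := by
  have hq : update q a (q a + q b) = q + Pi.single a (q b) := by
    ext j; rcases eq_or_ne j a with rfl | hj <;> simp [*]
  have hx : update x b (x b - x a) = x - Pi.single b (x a) := by
    ext j; rcases eq_or_ne j b with rfl | hj <;> simp [*]
  simp [hq, hx, add_smul, smul_sub, sum_add_distrib, Pi.single_apply, hab.symm]

/-- `t` refines `s` if `t` consists of nonnegative elements of the subgroup generated by `s`, and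
every element of `s` is a nonnegative integer combination of elements of `t`. -/
structure Refines {G : Type*} [AddCommGroup G] [Preorder G] (s t : Set G) : Prop where
  nonneg : ∀ g ∈ t, 0 ≤ g
  subset_span_int : t ⊆ Submodule.span ℤ s
  subset_span_nat : s ⊆ Submodule.span ℕ t

namespace Refines

variable {G : Type*} [AddCommGroup G] [Preorder G] {s t u : Set G}

theorem refl (hs : ∀ g ∈ s, 0 ≤ g) : Refines s s :=
  ⟨hs, Submodule.subset_span, Submodule.subset_span⟩

theorem trans (hst : Refines s t) (htu : Refines t u) : Refines s u where
  nonneg := htu.nonneg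
  subset_span_int := htu.subset_span_int.trans (Submodule.span_le.2 hst.subset_span_int)
  subset_span_nat := hst.subset_span_nat.trans (Submodule.span_le.2 htu.subset_span_nat)

theorem range_removeNth {n : ℕ} {x : Fin (n + 1) → G} (hx : ∀ j, 0 ≤ x j) {i : Fin (n + 1)}
    (hi : x i = 0) : Refines (Set.range x) (Set.range (i.removeNth x)) where
  nonneg := Set.forall_mem_range.2 fun j => hx _
  subset_span_int := (Set.range_comp_subset_range _ x).trans Submodule.subset_span
  subset_span_nat := by
    refine Set.range_subset_iff.2 fun j => ?_
    rcases eq_or_ne j i with rfl | hj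
    · exact hi ▸ zero_mem _
    · obtain ⟨k, rfl⟩ := Fin.exists_succAbove_eq hj
      exact Submodule.subset_span ⟨k, rfl⟩

variable [IsOrderedAddMonoid G]

theorem range_update_sub {ι : Type*} [DecidableEq ι] {x : ι → G} (hx : ∀ j, 0 ≤ x j) {a b : ι}
    (hab : a ≠ b) (hle : x a ≤ x b) :
    Refines (Set.range x) (Set.range (update x b (x b - x a))) where
  nonneg := Set.forall_mem_range.2 <|
    (forall_update_iff x fun _ g => 0 ≤ g).2 ⟨sub_nonneg.2 hle, fun j _ => hx j⟩
  subset_span_int := Set.range_subset_iff.2 <|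
    (forall_update_iff x fun _ g => g ∈ Submodule.span ℤ (Set.range x)).2
      ⟨sub_mem (Submodule.subset_span ⟨b, rfl⟩) (Submodule.subset_span ⟨a, rfl⟩),
        fun j _ => Submodule.subset_span ⟨j, rfl⟩⟩
  subset_span_nat := by
    have mem_of_ne {j : ι} (hj : j ≠ b) :
        x j ∈ Submodule.span ℕ (Set.range (update x b (x b - x a))) :=
      Submodule.subset_span ⟨j, update_of_ne hj _ _⟩
    have sub_mem : x b - x a ∈ Submodule.span ℕ (Set.range (update x b (x b - x a))) :=
      Submodule.subset_span ⟨b, update_self _ _ _⟩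
    refine Set.range_subset_iff.2 fun j => ?_
    rcases eq_or_ne j b with rfl | hj
    · simpa only [sub_add_cancel, SetLike.mem_coe] using add_mem sub_mem (mem_of_ne hab)
    · exact mem_of_ne hj

end Refines

variable {G : Type*} [AddCommGroup G] [LinearOrder G] [IsOrderedAddMonoid G]

theorem exists_eq_zero_of_sum_smul_eq_zero {ι : Type*} [Fintype ι] {q : ι → ℤ} {x : ι → G}
    (hq : 0 ≤ q) (hq0 : q ≠ 0) (hx : ∀ j, 0 ≤ x j) (hsum : ∑ j, q j • x j = 0) :
    ∃ i, x i = 0 := by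
  obtain ⟨i, hi⟩ := Function.ne_iff.1 hq0
  have smul_eq_zero_i : q i • x i = 0 :=
    (sum_eq_zero_iff_of_nonneg fun j _ => zsmul_nonneg (hx j) (hq j)).1 hsum i (mem_univ i)
  exact ⟨i, (smul_eq_zero.1 smul_eq_zero_i).resolve_left hi⟩

theorem exists_refines_eq_zero_of_sum_smul_eq_zero {ι : Type*} [Fintype ι] (q : ι → ℤ)
    (hq : q ≠ 0) (x : ι → G) (hx : ∀ j, 0 ≤ x j) (hsum : ∑ j, q j • x j = 0) :
    ∃ x' : ι → G, Refines (Set.range x) (Set.range x') ∧ ∃ i, x' i = 0 := by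
  classical
  induction q using sign_induction generalizing x with
  | nonneg q hq_nonneg =>
    exact ⟨x, .refl (Set.forall_mem_range.2 hx),
      exists_eq_zero_of_sum_smul_eq_zero hq_nonneg hq hx hsum⟩
  | nonpos q hq_nonpos =>
    exact ⟨x, .refl (Set.forall_mem_range.2 hx),
      exists_eq_zero_of_sum_smul_eq_zero (neg_nonneg.2 hq_nonpos) (neg_ne_zero.2 hq) hx
        (by simpa using hsum)⟩
  | step q a b ha hb ih_a ih_b =>
    have hab : a ≠ b := by rintro rfl; exact ha.not_gt hb
    have update_ne_zero {i j : ι} (hij : i ≠ j) (hi : q i ≠ 0) :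
        update q j (q a + q b) ≠ 0 := fun h => hi <| by simpa [hij] using congrFun h i
    rcases le_total (x a) (x b) with hle | hle
    · have hr := Refines.range_update_sub hx hab hle
      obtain ⟨x', hr', hx'⟩ := ih_a (update_ne_zero hab.symm hb.ne') _
        (Set.forall_mem_range.1 hr.nonneg)
        ((sum_update_add_smul_update_sub q x hab).trans hsum)
      exact ⟨x', hr.trans hr', hx'⟩
    · have hr := Refines.range_update_sub hx hab.symm hle
      obtain ⟨x', hr', hx'⟩ := ih_b (update_ne_zero hab ha.ne) _
        (Set.forall_mem_range.1 hr.nonneg)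
        (add_comm (q a) (q b) ▸ (sum_update_add_smul_update_sub q x hab.symm).trans hsum)
      exact ⟨x', hr.trans hr', hx'⟩

theorem exists_refines_linearIndependent {k : ℕ} (y : Fin k → G) (hy : ∀ i, 0 ≤ y i) :
    ∃ (n : ℕ) (x : Fin n → G), Refines (Set.range y) (Set.range x) ∧ LinearIndependent ℤ x := by
  induction k with
  | zero => exact ⟨0, y, .refl (Set.forall_mem_range.2 hy), linearIndependent_empty_type⟩
  | succ k ih =>
    by_cases hind : LinearIndependent ℤ y
    · exact ⟨k + 1, y, .refl (Set.forall_mem_range.2 hy), hind⟩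
    obtain ⟨q, hsum, hq⟩ := Fintype.not_linearIndependent_iff.1 hind
    obtain ⟨y', hyy', i, hi⟩ :=
      exists_refines_eq_zero_of_sum_smul_eq_zero q (Function.ne_iff.2 hq) y hy hsum
    have hdrop := Refines.range_removeNth (Set.forall_mem_range.1 hyy'.nonneg) hi
    obtain ⟨n, x, hx, hxind⟩ := ih (i.removeNth y') (Set.forall_mem_range.1 hdrop.nonneg)
    exact ⟨n, x, hyy'.trans (hdrop.trans hx), hxind⟩

theorem stmt_1_general {k : ℕ} (y : Fin k → G) (hy : ∀ i, 0 ≤ y i) :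
    ∃ (n : ℕ) (x : Fin n → G),
      (∀ j, 0 ≤ x j ∧ x j ∈ Submodule.span ℤ (Set.range y)) ∧
      LinearIndependent ℤ x ∧
      (∀ i, ∃ z : Fin n → ℕ, y i = ∑ j, z j • x j) := by
  obtain ⟨n, x, hyx, hx⟩ := exists_refines_linearIndependent y hy
  refine ⟨n, x, fun j => ⟨hyx.nonneg _ ⟨j, rfl⟩, hyx.subset_span_int ⟨j, rfl⟩⟩, hx, fun i => ?_⟩
  obtain ⟨z, hz⟩ :=
    (Submodule.mem_span_range_iff_exists_fun ℕ).1 (hyx.subset_span_nat ⟨i, rfl⟩)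
  exact ⟨z, hz.symm⟩

/-- Let y₁, …, y_k be nonnegative real numbers. Then there exist a natural
number n and real numbers x₁, …, x_n such that: each x_j is nonnegative and lies in the
ℚ-linear span of {y₁, …, y_k}; the family x₁, …, x_n is linearly independent over ℚ; and
every y_i is a nonnegative integer combination of x₁, …, x_n. -/
theorem stmt_1 (k : ℕ) (y : Fin k → ℝ) (hy : ∀ i, 0 ≤ y i) :
    ∃ (n : ℕ) (x : Fin n → ℝ),
      (∀ j, 0 ≤ x j ∧ x j ∈ Submodule.span ℚ (Set.range y)) ∧
      LinearIndependent ℚ x ∧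
      (∀ i, ∃ z : Fin n → ℕ, y i = ∑ j, (z j : ℝ) * x j) := by
  obtain ⟨n, x, hx, hind, hyx⟩ := stmt_1_general y hy
  exact ⟨n, x, fun j => ⟨(hx j).1, Submodule.span_le_restrictScalars ℤ ℚ _ (hx j).2⟩,
    (LinearIndependent.iff_fractionRing ℤ ℚ).1 hind, by simpa only [nsmul_eq_mul] using hyx⟩
end

section
/- For any two sets B, C ∈ 𝓘 there exists a set A ∈ 𝓘 such that B ⪯ A and C ⪯ A; that is, the collection 𝓘 is directed under the relation ⪯. -/
/-- `A ∈ 𝓘`: `A` is a finite subset of `[0,1]`, linearly independent over `ℚ`, and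
`1` is a strictly positive integer combination of the elements of `A`. -/
def MemI (A : Finset ℝ) : Prop :=
  (∀ a ∈ A, a ∈ Set.Icc (0 : ℝ) 1) ∧
  LinearIndependent ℚ (fun a : (A : Set ℝ) => (a : ℝ)) ∧
  ∃ z : ℝ → ℕ, (∀ a ∈ A, 0 < z a) ∧ (1 : ℝ) = ∑ a ∈ A, (z a : ℝ) * a

/-- `B ⪯ A`: every element of `B` is a nonnegative integer combination of elements of `A`. -/
def Preceq (B A : Finset ℝ) : Prop :=
  ∀ b ∈ B, ∃ z : ℝ → ℕ, b = ∑ a ∈ A, (z a : ℝ) * a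

/-!
Let `v` be a linearly independent family of positive vectors and let `x > 0` lie in its span. After
rescaling the members of `v` by positive scalars, `x = ∑ i ∈ P, v i - ∑ i ∈ N, v i` with `P` and `N`
disjoint. For `p ∈ P` and `b ∈ N`, subtracting the smaller of `v p`, `v b` from the larger keeps the
family positive and independent, leaves the old family in the span of the new one with
coefficients in `ℕ`, and cancels one term of the expression for `x`. So eventually only one of the
two sums is left, and since `x > 0` it is the positive one. Treating the elements of a finite set
one after the other puts all of them into the cone of a single independent positive family, and
dividing that family by a common denominator makes the coefficients natural numbers.

If `b + c = u` inside the free monoid generated by an independent set, then `b` involves only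
generators that occur in `u`; this is why the generators not occurring in `u` can be discarded.
-/

open Function

section Exchange

variable {R V ι : Type*} [AddCommGroup V]

theorem closure_range_le_closure_range_update_sub [DecidableEq ι] (v : ι → V) {i j : ι}
    (hij : i ≠ j) :
    AddSubmonoid.closure (Set.range v) ≤
      AddSubmonoid.closure (Set.range (update v i (v i - v j))) := by
  have mem_closure (k : ι) : update v i (v i - v j) k ∈
      AddSubmonoid.closure (Set.range (update v i (v i - v j))) :=
    AddSubmonoid.subset_closure (Set.mem_range_self k)
  have mem_of_ne {k : ι} (hk : k ≠ i) :
      v k ∈ AddSubmonoid.closure (Set.range (update v i (v i - v j))) := by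
    simpa only [update_of_ne hk] using mem_closure k
  rw [AddSubmonoid.closure_le]
  rintro _ ⟨k, rfl⟩
  obtain rfl | hk := eq_or_ne k i
  · have hadd := add_mem (mem_closure k) (mem_of_ne hij.symm)
    rwa [update_self, sub_add_cancel] at hadd
  · exact mem_of_ne hk

theorem linearIndependent_update_sub [Ring R] [Module R V] [DecidableEq ι] {v : ι → V}
    (hv : LinearIndependent R v) {i j : ι} (hij : i ≠ j) :
    LinearIndependent R (update v i (v i - v j)) := by
  have update_eq : update v i (v i - v j) = v + fun k => (Pi.single i (-1) : ι → R) k • v j := by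
    ext k
    obtain rfl | hk := eq_or_ne k i
    · simp [sub_eq_add_neg]
    · simp [hk]
  rw [update_eq, linearIndependent_add_smul_iff (Pi.single_eq_of_ne hij.symm _)]
  exact hv

theorem sum_update_sub_of_mem [DecidableEq ι] {s : Finset ι} {i : ι} (hi : i ∈ s) (v : ι → V)
    (x : V) : ∑ k ∈ s, update v i (v i - x) k = ∑ k ∈ s, v k - x := by
  rw [Finset.sum_update_of_mem hi, ← Finset.erase_eq, Finset.sum_erase_eq_sub hi]
  abel

end Exchange

/-- A linearly independent family of positive vectors, i.e. the generators of a simplicial cone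
contained in the positive cone of `V`. -/
structure IsPosIndependent (R : Type*) {V ι : Type*} [Semiring R] [AddCommMonoid V] [Preorder V]
    [Module R V] (v : ι → V) : Prop where
  pos : ∀ i, 0 < v i
  linearIndependent : LinearIndependent R v

theorem IsPosIndependent.smul {K V ι : Type*} [DivisionRing K] [PartialOrder K] [AddCommGroup V]
    [PartialOrder V] [Module K V] [PosSMulStrictMono K V] {v : ι → V} (hv : IsPosIndependent K v)
    {r : ι → K} (hr : ∀ i, 0 < r i) : IsPosIndependent K fun i => r i • v i where
  pos i := smul_pos (hr i) (hv.pos i)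
  linearIndependent := hv.linearIndependent.units_smul fun i => Units.mk0 (r i) (hr i).ne'

theorem nonneg_of_mem_closure {M : Type*} [AddMonoid M] [Preorder M] [AddLeftMono M] {s : Set M}
    (hs : ∀ x ∈ s, 0 ≤ x) {x : M} (hx : x ∈ AddSubmonoid.closure s) : 0 ≤ x :=
  (AddSubmonoid.closure_le (S := AddSubmonoid.nonneg M)).2 hs hx

section PositiveFamilies

variable {R V ι : Type*} [AddCommGroup V] [LinearOrder V] [IsOrderedAddMonoid V]
  [Ring R] [Module R V]

theorem IsPosIndependent.update_sub [DecidableEq ι] {v : ι → V} (hv : IsPosIndependent R v)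
    {i j : ι} (hlt : v j < v i) : IsPosIndependent R (update v i (v i - v j)) where
  pos k := by
    obtain rfl | hk := eq_or_ne k i
    · simpa using hlt
    · simpa [hk] using hv.pos k
  linearIndependent := linearIndependent_update_sub hv.linearIndependent fun h => hlt.ne' (h ▸ rfl)

theorem IsPosIndependent.exists_sum_sub_sum_mem_closure_or [Nontrivial R] {v : ι → V}
    (hv : IsPosIndependent R v) {P N : Finset ι} (hPN : Disjoint P N) :
    ∃ w : ι → V, IsPosIndependent R w ∧
      AddSubmonoid.closure (Set.range v) ≤ AddSubmonoid.closure (Set.range w) ∧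
      (∑ i ∈ P, v i - ∑ i ∈ N, v i ∈ AddSubmonoid.closure (Set.range w) ∨
        ∑ i ∈ N, v i - ∑ i ∈ P, v i ∈ AddSubmonoid.closure (Set.range w)) := by
  classical
  induction hn : P.card + N.card generalizing v P N with
  | zero =>
    obtain ⟨rfl, rfl⟩ : P = ∅ ∧ N = ∅ := by simpa using hn
    exact ⟨v, hv, le_rfl, .inl (by simp)⟩
  | succ n ih =>
    have sum_mem (s : Finset ι) : ∑ i ∈ s, v i ∈ AddSubmonoid.closure (Set.range v) :=
      AddSubmonoid.sum_mem _ fun i _ => AddSubmonoid.subset_closure (Set.mem_range_self i)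
    obtain rfl | ⟨p, hp⟩ := P.eq_empty_or_nonempty
    · exact ⟨v, hv, le_rfl, .inr (by simpa using sum_mem N)⟩
    obtain rfl | ⟨b, hb⟩ := N.eq_empty_or_nonempty
    · exact ⟨v, hv, le_rfl, .inl (by simpa using sum_mem P)⟩
    have hpb : p ≠ b := fun h => Finset.disjoint_left.1 hPN hp (h ▸ hb)
    wlog hlt : v p < v b generalizing P N p b
    · have hlt' : v b < v p :=
        lt_of_le_of_ne (not_lt.1 hlt) (hv.linearIndependent.injective.ne hpb.symm)
      simpa only [or_comm] using this hPN.symm (by rwa [add_comm]) b hb p hp hpb.symm hlt'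
    have hcard : (P.erase p).card + N.card = n := by
      have := Finset.card_erase_add_one hp
      omega
    obtain ⟨w, hw, hle, hmem⟩ :=
      ih (hv.update_sub hlt) (hPN.mono_left (Finset.erase_subset p P)) hcard
    have sum_erase : ∑ i ∈ P.erase p, update v b (v b - v p) i = ∑ i ∈ P, v i - v p := by
      have hbP : b ∉ P.erase p := fun h =>
        Finset.disjoint_left.1 hPN (Finset.mem_of_mem_erase h) hb
      rw [Finset.sum_update_of_notMem hbP, Finset.sum_erase_eq_sub hp]
    rw [sum_erase, sum_update_sub_of_mem hb, sub_sub_sub_cancel_right,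
      sub_sub_sub_cancel_right] at hmem
    exact ⟨w, hw, (closure_range_le_closure_range_update_sub v hpb.symm).trans hle, hmem⟩

theorem IsPosIndependent.exists_sum_sub_sum_mem_closure [Nontrivial R] {v : ι → V}
    (hv : IsPosIndependent R v) {P N : Finset ι} (hPN : Disjoint P N)
    (hpos : 0 < ∑ i ∈ P, v i - ∑ i ∈ N, v i) :
    ∃ w : ι → V, IsPosIndependent R w ∧
      AddSubmonoid.closure (Set.range v) ≤ AddSubmonoid.closure (Set.range w) ∧
      ∑ i ∈ P, v i - ∑ i ∈ N, v i ∈ AddSubmonoid.closure (Set.range w) := by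
  obtain ⟨w, hw, hle, hmem | hmem⟩ := hv.exists_sum_sub_sum_mem_closure_or hPN
  · exact ⟨w, hw, hle, hmem⟩
  · have hnonneg := nonneg_of_mem_closure (Set.forall_mem_range.2 fun i => (hw.pos i).le) hmem
    rw [← neg_sub, neg_nonneg] at hnonneg
    exact absurd hpos hnonneg.not_gt

end PositiveFamilies

section SimplicialCones

variable {K V ι : Type*} [Field K] [LinearOrder K] [IsStrictOrderedRing K]
  [AddCommGroup V] [Module K V]

theorem hull_le_hull_of_subset_closure {s t : Set V} (h : s ⊆ AddSubmonoid.closure t) :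
    PointedCone.hull K s ≤ PointedCone.hull K t :=
  Submodule.span_le.2 (h.trans Submodule.closure_subset_span)

theorem hull_range_le_hull_range_smul (v : ι → V) {r : ι → K} (hr : ∀ i, 0 < r i) :
    PointedCone.hull K (Set.range v) ≤ PointedCone.hull K (Set.range fun i => r i • v i) := by
  refine Submodule.span_le.2 ?_
  rintro _ ⟨i, rfl⟩
  have hmem := PointedCone.smul_mem (PointedCone.hull K (Set.range fun i => r i • v i))
    (inv_nonneg.2 (hr i).le) (PointedCone.subset_hull (Set.mem_range_self i))
  rwa [inv_smul_smul₀ (hr i).ne'] at hmem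

theorem exists_smul_sum_sub_sum_eq [Finite ι] {v : ι → V} {x : V}
    (hx : x ∈ Submodule.span K (Set.range v)) :
    ∃ (r : ι → K) (P N : Finset ι), (∀ i, 0 < r i) ∧ Disjoint P N ∧
      x = ∑ i ∈ P, r i • v i - ∑ i ∈ N, r i • v i := by
  have := Fintype.ofFinite ι
  obtain ⟨q, rfl⟩ := (Submodule.mem_span_range_iff_exists_fun K).1 hx
  refine ⟨fun i => if q i = 0 then 1 else |q i|, Finset.univ.filter (0 < q ·),
    Finset.univ.filter (q · < 0), fun i => ?_, ?_, ?_⟩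
  · dsimp only
    split_ifs with hi
    · exact one_pos
    · exact abs_pos.2 hi
  · exact Finset.disjoint_filter.2 fun i _ hi => hi.not_gt
  · rw [Finset.sum_filter, Finset.sum_filter, ← Finset.sum_sub_distrib]
    refine Finset.sum_congr rfl fun i _ => ?_
    obtain hi | hi | hi := lt_trichotomy (q i) 0
    · simp [hi, hi.ne, hi.not_gt, abs_of_neg]
    · simp [hi]
    · simp [hi, hi.ne', hi.not_gt, abs_of_pos]

variable [LinearOrder V] [IsOrderedAddMonoid V] [PosSMulStrictMono K V]

theorem IsPosIndependent.exists_mem_hull [Finite ι] {v : ι → V} (hv : IsPosIndependent K v) {x : V}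
    (hx : 0 < x) (hspan : x ∈ Submodule.span K (Set.range v)) :
    ∃ w : ι → V, IsPosIndependent K w ∧
      PointedCone.hull K (Set.range v) ≤ PointedCone.hull K (Set.range w) ∧
      x ∈ PointedCone.hull K (Set.range w) := by
  obtain ⟨r, P, N, hr, hPN, rfl⟩ := exists_smul_sum_sub_sum_eq hspan
  obtain ⟨w, hw, hle, hmem⟩ := (hv.smul hr).exists_sum_sub_sum_mem_closure hPN hx
  exact ⟨w, hw, (hull_range_le_hull_range_smul v hr).trans
    (hull_le_hull_of_subset_closure (AddSubmonoid.subset_closure.trans hle)),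
    Submodule.closure_subset_span hmem⟩

theorem IsPosIndependent.exists_subset_hull [Finite ι] {v : ι → V} (hv : IsPosIndependent K v)
    (S : Finset V) (hS : ∀ x ∈ S, 0 < x)
    (hspan : (S : Set V) ⊆ Submodule.span K (Set.range v)) :
    ∃ w : ι → V, IsPosIndependent K w ∧
      PointedCone.hull K (Set.range v) ≤ PointedCone.hull K (Set.range w) ∧
      (S : Set V) ⊆ PointedCone.hull K (Set.range w) := by
  classical
  induction S using Finset.induction_on with
  | empty => exact ⟨v, hv, le_rfl, by simp⟩
  | insert x S _ ih =>
    rw [Finset.forall_mem_insert] at hS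
    rw [Finset.coe_insert, Set.insert_subset_iff] at hspan
    obtain ⟨w, hw, hvw, hSw⟩ := ih hS.2 hspan.2
    have hrange : Set.range v ⊆ Submodule.span K (Set.range w) :=
      PointedCone.subset_hull.trans
        (hvw.trans (PointedCone.hull_le_span K (Set.range w)))
    obtain ⟨w', hw', hww', hx⟩ := hw.exists_mem_hull hS.1 (Submodule.span_le.2 hrange hspan.1)
    refine ⟨w', hw', hvw.trans hww', ?_⟩
    rw [Finset.coe_insert, Set.insert_subset_iff]
    exact ⟨hx, hSw.trans hww'⟩

end SimplicialCones

section Denominators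

variable {V : Type*} [AddCommMonoid V] [Module ℚ V]

theorem exists_nsmul_mem_closure_of_mem_hull {s : Set V} {x : V} (hx : x ∈ PointedCone.hull ℚ s) :
    ∃ n : ℕ, 0 < n ∧ n • x ∈ AddSubmonoid.closure s := by
  induction hx using Submodule.span_induction with
  | mem x hx => exact ⟨1, one_pos, by simpa using AddSubmonoid.subset_closure hx⟩
  | zero => exact ⟨1, one_pos, by simp⟩
  | add x y _ _ ihx ihy =>
    obtain ⟨m, hm, hmx⟩ := ihx
    obtain ⟨n, hn, hny⟩ := ihy
    refine ⟨m * n, Nat.mul_pos hm hn, ?_⟩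
    rw [smul_add, mul_nsmul x, mul_nsmul' y]
    exact add_mem (nsmul_mem hmx n) (nsmul_mem hny m)
  | smul c x _ ih =>
    obtain ⟨n, hn, hnx⟩ := ih
    refine ⟨n * NNRat.den c, Nat.mul_pos hn (NNRat.den_pos c), ?_⟩
    have den_smul : NNRat.den c • c • x = NNRat.num c • x := by
      rw [← Nonneg.coe_smul, ← Nat.cast_smul_eq_nsmul ℚ, ← Nat.cast_smul_eq_nsmul ℚ, smul_smul]
      congr 1
      exact congrArg ((↑) : ℚ≥0 → ℚ) (NNRat.den_mul_eq_num c)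
    rw [mul_smul, den_smul, smul_comm]
    exact nsmul_mem hnx _

theorem exists_nsmul_mem_closure_of_subset_hull {s : Set V} (S : Finset V)
    (hS : (S : Set V) ⊆ PointedCone.hull ℚ s) :
    ∃ n : ℕ, 0 < n ∧ ∀ x ∈ S, n • x ∈ AddSubmonoid.closure s := by
  choose! n hn hmem using fun x (hx : x ∈ S) => exists_nsmul_mem_closure_of_mem_hull (hS hx)
  refine ⟨∏ x ∈ S, n x, Finset.prod_pos hn, fun x hx => ?_⟩
  obtain ⟨m, hm⟩ := Finset.dvd_prod_of_mem n hx
  rw [hm, mul_nsmul]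
  exact nsmul_mem (hmem x hx) m

theorem mem_closure_range_inv_smul {ι : Type*} {v : ι → V} {n : ℕ} (hn : 0 < n) {x : V}
    (hx : n • x ∈ AddSubmonoid.closure (Set.range v)) :
    x ∈ AddSubmonoid.closure (Set.range fun i => (n : ℚ)⁻¹ • v i) := by
  have hmem := AddSubmonoid.mem_map_of_mem (DistribSMul.toAddMonoidHom V (n : ℚ)⁻¹) hx
  rw [AddMonoidHom.map_mclosure, ← Set.range_comp] at hmem
  simpa [← Nat.cast_smul_eq_nsmul ℚ, hn.ne', comp_def] using hmem

end Denominators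

theorem exists_linearIndepOn_pos_subset_closure {V : Type*} [AddCommGroup V] [LinearOrder V]
    [IsOrderedAddMonoid V] [Module ℚ V] [PosSMulStrictMono ℚ V] (S : Finset V)
    (hS : ∀ x ∈ S, 0 < x) :
    ∃ A : Finset V, (∀ a ∈ A, 0 < a) ∧ LinearIndepOn ℚ id (A : Set V) ∧
      (S : Set V) ⊆ AddSubmonoid.closure (A : Set V) := by
  obtain ⟨b, hbS, hspan, hli⟩ := exists_linearIndependent ℚ (S : Set V)
  have : Finite b := S.finite_toSet.subset hbS
  have hb : IsPosIndependent ℚ ((↑) : b → V) := ⟨fun i => hS i (hbS i.2), hli⟩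
  obtain ⟨w, hw, -, hSw⟩ := hb.exists_subset_hull S hS
    (by rw [Subtype.range_coe, hspan]; exact Submodule.subset_span)
  obtain ⟨n, hn, hmem⟩ := exists_nsmul_mem_closure_of_subset_hull S hSw
  have hw' := hw.smul (r := fun _ => (n : ℚ)⁻¹) fun _ => by positivity
  refine ⟨(Set.finite_range fun i => (n : ℚ)⁻¹ • w i).toFinset, ?_, ?_, ?_⟩
  · simp only [Set.Finite.mem_toFinset]
    exact Set.forall_mem_range.2 hw'.pos
  · rw [Set.Finite.coe_toFinset]
    exact hw'.linearIndependent.linearIndepOn_id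
  · rw [Set.Finite.coe_toFinset]
    exact fun x hx => mem_closure_range_inv_smul hn (hmem x hx)

theorem mem_closure_filter_of_add_eq_sum {M : Type*} [AddCommMonoid M] {A : Finset M}
    (hA : LinearIndepOn ℕ id (A : Set M)) {y : M → ℕ} {b c : M}
    (hb : b ∈ AddSubmonoid.closure (A : Set M)) (hc : c ∈ AddSubmonoid.closure (A : Set M))
    (hbc : b + c = ∑ a ∈ A, y a • a) :
    b ∈ AddSubmonoid.closure (A.filter (y · ≠ 0) : Set M) := by
  obtain ⟨f, -, rfl⟩ := AddSubmonoid.mem_closure_finset.1 hb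
  obtain ⟨g, -, rfl⟩ := AddSubmonoid.mem_closure_finset.1 hc
  simp only [← Finset.sum_add_distrib, ← add_smul] at hbc
  have hfg : ∀ a ∈ A, f a + g a = y a := linearIndepOn_finset_iffₛ.1 hA (f + g) y hbc
  refine AddSubmonoid.sum_mem _ fun a ha => ?_
  obtain hfa | hfa := eq_or_ne (f a) 0
  · simp [hfa]
  · have hya : y a ≠ 0 := by
      have := hfg a ha
      omega
    exact nsmul_mem (AddSubmonoid.subset_closure (by simp [ha, hya])) _

section Decompositions

variable {M : Type*} [AddCommMonoid M] [Preorder M]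

/-- `A` consists of positive vectors and `u` is a combination of all of them with strictly positive
integer coefficients. Membership in `𝓘` is the case `u = 1` together with linear independence. -/
structure IsPosDecomposition (u : M) (A : Finset M) : Prop where
  pos : ∀ a ∈ A, 0 < a
  exists_sum_eq : ∃ z : M → ℕ, (∀ a ∈ A, 0 < z a) ∧ ∑ a ∈ A, z a • a = u

namespace IsPosDecomposition

variable {u : M} {A B : Finset M}

theorem exists_add_eq (hB : IsPosDecomposition u B) {b : M} (hb : b ∈ B) :
    ∃ c ∈ AddSubmonoid.closure (B : Set M), b + c = u := by
  obtain ⟨z, hz, rfl⟩ := hB.exists_sum_eq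
  have mem_closure {a : M} (ha : a ∈ B) (n : ℕ) : n • a ∈ AddSubmonoid.closure (B : Set M) :=
    nsmul_mem (AddSubmonoid.subset_closure ha) n
  classical
  refine ⟨(z b - 1) • b + ∑ a ∈ B.erase b, z a • a, add_mem (mem_closure hb _)
    (AddSubmonoid.sum_mem _ fun a ha => mem_closure (Finset.mem_of_mem_erase ha) _), ?_⟩
  rw [← add_assoc, ← succ_nsmul', Nat.sub_add_cancel (hz b hb)]
  exact Finset.add_sum_erase B (fun a => z a • a) hb

theorem mem_closure (hB : IsPosDecomposition u B) : u ∈ AddSubmonoid.closure (B : Set M) := by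
  obtain ⟨z, -, rfl⟩ := hB.exists_sum_eq
  exact AddSubmonoid.sum_mem _ fun a ha => nsmul_mem (AddSubmonoid.subset_closure ha) _

theorem le [AddLeftMono M] (hB : IsPosDecomposition u B) {b : M} (hb : b ∈ B) : b ≤ u := by
  obtain ⟨c, hc, rfl⟩ := hB.exists_add_eq hb
  exact le_add_of_nonneg_right (nonneg_of_mem_closure (fun a ha => (hB.pos a ha).le) hc)

theorem filter_ne_zero (hA : ∀ a ∈ A, 0 < a) {y : M → ℕ} (hy : ∑ a ∈ A, y a • a = u) :
    IsPosDecomposition u (A.filter (y · ≠ 0)) where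
  pos a ha := hA a (Finset.mem_of_mem_filter a ha)
  exists_sum_eq := by
    refine ⟨y, fun a ha => Nat.pos_of_ne_zero (Finset.mem_filter.1 ha).2, ?_⟩
    rw [← hy]
    exact Finset.sum_filter_of_ne fun a _ hne hya => hne (by rw [hya, zero_smul])

theorem subset_closure_filter_ne_zero (hB : IsPosDecomposition u B)
    (hA : LinearIndepOn ℕ id (A : Set M))
    (hBA : (B : Set M) ⊆ AddSubmonoid.closure (A : Set M)) {y : M → ℕ}
    (hy : ∑ a ∈ A, y a • a = u) :
    (B : Set M) ⊆ AddSubmonoid.closure (A.filter (y · ≠ 0) : Set M) := by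
  intro b hb
  obtain ⟨c, hc, hbc⟩ := hB.exists_add_eq hb
  exact mem_closure_filter_of_add_eq_sum hA (hBA hb) (AddSubmonoid.closure_le.2 hBA hc)
    (hbc.trans hy.symm)

end IsPosDecomposition

end Decompositions

theorem stmt_2_general {V : Type*} [AddCommGroup V] [LinearOrder V] [IsOrderedAddMonoid V]
    [Module ℚ V] [PosSMulStrictMono ℚ V] {u : V} {B C : Finset V} (hB : IsPosDecomposition u B)
    (hC : IsPosDecomposition u C) :
    ∃ A : Finset V, (IsPosDecomposition u A ∧ LinearIndepOn ℚ id (A : Set V)) ∧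
      (B : Set V) ⊆ AddSubmonoid.closure (A : Set V) ∧
      (C : Set V) ⊆ AddSubmonoid.closure (A : Set V) := by
  obtain ⟨A, hpos, hli, hBC⟩ := exists_linearIndepOn_pos_subset_closure (B ∪ C) fun x hx =>
    (Finset.mem_union.1 hx).elim (hB.pos x) (hC.pos x)
  rw [Finset.coe_union, Set.union_subset_iff] at hBC
  obtain ⟨y, -, hy⟩ :=
    AddSubmonoid.mem_closure_finset.1 (AddSubmonoid.closure_le.2 hBC.1 hB.mem_closure)
  have hliℕ : LinearIndepOn ℕ id (A : Set V) := LinearIndependent.restrict_scalars' ℕ hli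
  exact ⟨A.filter (y · ≠ 0),
    ⟨.filter_ne_zero hpos hy, hli.mono (Finset.coe_subset.2 (Finset.filter_subset _ A))⟩,
    hB.subset_closure_filter_ne_zero hliℕ hBC.1 hy, hC.subset_closure_filter_ne_zero hliℕ hBC.2 hy⟩

theorem memI_iff {A : Finset ℝ} :
    MemI A ↔ IsPosDecomposition 1 A ∧ LinearIndepOn ℚ id (A : Set ℝ) := by
  constructor
  · rintro ⟨hIcc, hli, z, hz, hsum⟩
    refine ⟨⟨fun a ha => (hIcc a ha).1.lt_of_ne' (hli.ne_zero ⟨a, ha⟩), z, hz, ?_⟩, hli⟩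
    simpa only [nsmul_eq_mul] using hsum.symm
  · rintro ⟨hA, hli⟩
    obtain ⟨z, hz, hsum⟩ := hA.exists_sum_eq
    refine ⟨fun a ha => ⟨(hA.pos a ha).le, hA.le ha⟩, hli, z, hz, ?_⟩
    simpa only [nsmul_eq_mul] using hsum.symm

theorem preceq_iff_subset_closure {A B : Finset ℝ} :
    Preceq B A ↔ (B : Set ℝ) ⊆ AddSubmonoid.closure (A : Set ℝ) := by
  refine forall₂_congr fun b _ => ⟨?_, fun hb => ?_⟩
  · rintro ⟨z, rfl⟩
    simp only [← nsmul_eq_mul]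
    exact AddSubmonoid.sum_mem _ fun a ha => nsmul_mem (AddSubmonoid.subset_closure ha) _
  · obtain ⟨z, -, rfl⟩ := AddSubmonoid.mem_closure_finset.1 hb
    exact ⟨z, by simp only [nsmul_eq_mul]⟩

/-- For any two sets B, C ∈ 𝓘 there exists A ∈ 𝓘 with B ⪯ A and C ⪯ A;
that is, 𝓘 is directed under ⪯. -/
theorem stmt_2 (B C : Finset ℝ) (hB : MemI B) (hC : MemI C) :
    ∃ A : Finset ℝ, MemI A ∧ Preceq B A ∧ Preceq C A := by
  simp only [memI_iff, preceq_iff_subset_closure] at hB hC ⊢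
  exact stmt_2_general hB.1 hC.1
end

section
/- For every real number x with 0 ≤ x ≤ 1 there exists a set A ∈ 𝓘 such that x is a nonnegative integer combination of elements of A. -/
/-!
If `x = m / n` is rational, take `A = {1 / n}`. If `x` is irrational, take `A = {t, 1 - t}` with
`t` the fractional part of `x`: the two elements add up to `1`, so
`x = ⌊x⌋ + t = (⌊x⌋ + 1) * t + ⌊x⌋ * (1 - t)`.
-/

theorem mem_closure_finset_iff_exists_sum_natCast_mul {R : Type*} [NonAssocSemiring R]
    {A : Finset R} {x : R} :
    x ∈ AddSubmonoid.closure (A : Set R) ↔ ∃ z : R → ℕ, x = ∑ a ∈ A, (z a : R) * a := by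
  constructor
  · intro hx
    obtain ⟨z, -, hz⟩ := AddSubmonoid.mem_closure_finset.mp hx
    exact ⟨z, by simp only [← hz, nsmul_eq_mul]⟩
  · rintro ⟨z, rfl⟩
    simp only [← nsmul_eq_mul]
    exact sum_mem fun a ha ↦ nsmul_mem (AddSubmonoid.subset_closure ha) _

theorem nnratCast_mem_closure_inv_den {K : Type*} [DivisionSemiring K] (q : ℚ≥0) :
    (q : K) ∈ AddSubmonoid.closure {(q.den : K)⁻¹} :=
  AddSubmonoid.mem_closure_singleton.mpr
    ⟨q.num, by rw [nsmul_eq_mul, ← div_eq_mul_inv, ← NNRat.cast_def]⟩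

theorem mem_closure_fract_one_sub_fract {R : Type*} [Ring R] [LinearOrder R]
    [IsStrictOrderedRing R] [FloorRing R] {x : R} (hx : 0 ≤ x) :
    x ∈ AddSubmonoid.closure {Int.fract x, 1 - Int.fract x} := by
  refine (AddSubmonoid.mem_closure_pair _ _ _).mpr ⟨⌊x⌋₊ + 1, ⌊x⌋₊, ?_⟩
  calc (⌊x⌋₊ + 1) • Int.fract x + ⌊x⌋₊ • (1 - Int.fract x)
      = (⌊x⌋₊ : R) + Int.fract x := by
        rw [succ_nsmul, add_right_comm, ← nsmul_add, add_sub_cancel, nsmul_one]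
    _ = x := by rw [natCast_floor_eq_intCast_floor hx, Int.floor_add_fract]

theorem linearIndependent_pair_one_iff {K L : Type*} [Field K] [Ring L] [Nontrivial L]
    [Algebra K L] {x : L} :
    LinearIndependent K ![1, x] ↔ x ∉ Set.range (algebraMap K L) := by
  simp only [LinearIndependent.pair_iff' one_ne_zero, Set.mem_range, not_exists,
    Algebra.algebraMap_eq_smul_one]

theorem linearIndependent_pair_sub_iff {R V : Type*} [Ring R] [AddCommGroup V] [Module R V]
    {u v : V} : LinearIndependent R ![v, u - v] ↔ LinearIndependent R ![u, v] := by
  rw [← LinearIndependent.pair_add_right_iff, add_sub_cancel, LinearIndependent.pair_symm_iff]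

theorem linearIndependent_rat_pair_one_sub {t : ℝ} (ht : Irrational t) :
    LinearIndependent ℚ ![t, 1 - t] :=
  linearIndependent_pair_sub_iff.mpr (linearIndependent_pair_one_iff.mpr ht)

theorem memI_singleton_inv_natCast {n : ℕ} (hn : n ≠ 0) : MemI {(n : ℝ)⁻¹} := by
  have hn' : (n : ℝ) ≠ 0 := Nat.cast_ne_zero.mpr hn
  refine ⟨?_, ?_, fun _ ↦ n, fun _ _ ↦ Nat.pos_of_ne_zero hn, ?_⟩
  · simp only [Finset.mem_singleton, forall_eq]
    exact ⟨inv_nonneg.mpr n.cast_nonneg, Nat.cast_inv_le_one n⟩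
  · rw [Finset.coe_singleton]
    exact LinearIndepOn.singleton (v := id) (inv_ne_zero hn')
  · rw [Finset.sum_singleton, mul_inv_cancel₀ hn']

theorem memI_pair_one_sub_of_irrational {t : ℝ} (ht : Irrational t) (ht01 : t ∈ Set.Icc 0 1) :
    MemI {t, 1 - t} := by
  have hli : LinearIndependent ℚ ![t, 1 - t] := linearIndependent_rat_pair_one_sub ht
  have hne : t ≠ 1 - t := fun h ↦ zero_ne_one (hli.injective h : (0 : Fin 2) = 1)
  refine ⟨?_, ?_, fun _ ↦ 1, fun _ _ ↦ one_pos, ?_⟩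
  · simp only [Finset.forall_mem_insert, Finset.mem_singleton, forall_eq]
    exact ⟨ht01, Set.Icc.one_sub_mem ht01⟩
  · rw [Finset.coe_pair]
    exact hli.linearIndepOn_id' (Matrix.range_cons_cons_empty t (1 - t) ![])
  · rw [Finset.sum_pair hne, Nat.cast_one, one_mul, one_mul, add_sub_cancel]

theorem stmt_3_general (x : ℝ) (hx : 0 ≤ x) :
    ∃ A : Finset ℝ, MemI A ∧ ∃ z : ℝ → ℕ, x = ∑ a ∈ A, (z a : ℝ) * a := by
  simp only [← mem_closure_finset_iff_exists_sum_natCast_mul]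
  by_cases hirr : Irrational x
  · have hfract : Irrational (Int.fract x) := hirr.sub_intCast ⌊x⌋
    have hfract01 : Int.fract x ∈ Set.Icc 0 1 := ⟨Int.fract_nonneg x, (Int.fract_lt_one x).le⟩
    refine ⟨_, memI_pair_one_sub_of_irrational hfract hfract01, ?_⟩
    simpa only [Finset.coe_pair] using mem_closure_fract_one_sub_fract hx
  · obtain ⟨q, rfl⟩ := exists_rat_of_not_irrational hirr
    lift q to ℚ≥0 using Rat.cast_nonneg.mp hx
    refine ⟨_, memI_singleton_inv_natCast q.den_ne_zero, ?_⟩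
    simpa only [Finset.coe_singleton, Rat.cast_nnratCast] using nnratCast_mem_closure_inv_den q

/-- For every real number x with 0 ≤ x ≤ 1 there exists a set A ∈ 𝓘 such
that x is a nonnegative integer combination of elements of A. -/
theorem stmt_3 (x : ℝ) (hx0 : 0 ≤ x) (hx1 : x ≤ 1) :
    ∃ A : Finset ℝ, MemI A ∧ ∃ z : ℝ → ℕ, x = ∑ a ∈ A, (z a : ℝ) * a :=
  stmt_3_general x hx0
end

section
/- Let x₁, …, x_n be strictly positive real numbers that are linearly independent over ℚ, and let w₁, …, w_n be natural numbers with 1 = ∑_i w_i·x_i. Then the map z ↦ ∑_i z_i·x_i is a bijection from the set {z ∈ ℤⁿ : 0 ≤ z_i ≤ w_i for all i} onto the set of real numbers y such that both y and 1 − y are nonnegative integer combinations of x₁, …, x_n. -/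
/-! An injective additive map `f` out of an ordered group turns the order interval `[0, w]` into the
set of `y` such that `y` and `f w - y` both lie in the image of the nonnegative cone: if `y = f a`
and `f w - y = f b`, then `b = w - a`, so `0 ≤ b` means `a ≤ w`. Linear independence says that
`z ↦ ∑ i, z i • x i` is such a map on `ι → ℤ` with its pointwise order, where the nonnegative cone
is `ι → ℕ`. -/

open Function Set

theorem bijOn_Icc_zero_of_injective {G H : Type*} [AddGroup G] [Preorder G] [AddRightMono G]
    [AddGroup H] {f : G →+ H} (hf : Injective f) (w : G) :
    BijOn f (Icc 0 w) {y | y ∈ f '' Ici 0 ∧ f w - y ∈ f '' Ici 0} := by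
  refine ⟨fun a ⟨ha, haw⟩ ↦ ⟨⟨a, ha, rfl⟩, w - a, sub_nonneg.2 haw, map_sub f w a⟩, hf.injOn, ?_⟩
  rintro _ ⟨⟨a, ha, rfl⟩, b, hb, hab⟩
  obtain rfl : b = w - a := hf (hab.trans (map_sub f w a).symm)
  exact ⟨a, ⟨ha, sub_nonneg.1 hb⟩, rfl⟩

section LinearCombination

variable {ι M : Type*} [Fintype ι] [AddCommGroup M] {x : ι → M}

theorem mem_fintypeLinearCombination_image_Ici_zero {y : M} :
    y ∈ Fintype.linearCombination ℤ x '' Ici 0 ↔ ∃ c : ι → ℕ, y = ∑ i, c i • x i := by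
  constructor
  · rintro ⟨z, hz, rfl⟩
    lift z to ι → ℕ using hz
    exact ⟨z, by simp [Fintype.linearCombination_apply]⟩
  · rintro ⟨c, rfl⟩
    exact ⟨fun i ↦ c i, fun i ↦ Int.natCast_nonneg (c i),
      by simp [Fintype.linearCombination_apply]⟩

theorem stmt_7_general (hli : LinearIndependent ℤ x) {w : ι → ℕ} {u : M}
    (hu : u = ∑ i, w i • x i) :
    BijOn (fun z : ι → ℤ ↦ ∑ i, z i • x i) {z | ∀ i, 0 ≤ z i ∧ z i ≤ w i}
      {y | (∃ c : ι → ℕ, y = ∑ i, c i • x i) ∧ ∃ c : ι → ℕ, u - y = ∑ i, c i • x i} := by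
  let f := Fintype.linearCombination ℤ x
  have hf : Injective f := hli.fintypeLinearCombination_injective
  have hfw : f (fun i ↦ w i) = u := by simp [f, hu, Fintype.linearCombination_apply]
  have hIcc : {z : ι → ℤ | ∀ i, 0 ≤ z i ∧ z i ≤ w i} = Icc 0 (fun i ↦ (w i : ℤ)) :=
    Set.ext fun _ ↦ forall_and
  simp only [hIcc, ← mem_fintypeLinearCombination_image_Ici_zero, ← hfw]
  exact bijOn_Icc_zero_of_injective (f := f.toAddMonoidHom) hf _

end LinearCombination

/-- Let x₁, …, x_n be strictly positive reals, linearly independent over ℚ,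
and let w₁, …, w_n be naturals with 1 = ∑ w_i·x_i. Then z ↦ ∑ z_i·x_i is a bijection
from {z ∈ ℤⁿ : 0 ≤ z_i ≤ w_i for all i} onto the set of reals y such that both y and
1 − y are nonnegative integer combinations of x₁, …, x_n. -/
theorem stmt_7 (n : ℕ) (x : Fin n → ℝ) (hx : ∀ i, 0 < x i)
    (hli : LinearIndependent ℚ x) (w : Fin n → ℕ)
    (h1 : (1 : ℝ) = ∑ i, (w i : ℝ) * x i) :
    Set.BijOn (fun z : Fin n → ℤ => ∑ i, (z i : ℝ) * x i)
      {z : Fin n → ℤ | ∀ i, 0 ≤ z i ∧ z i ≤ (w i : ℤ)}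
      {y : ℝ | (∃ c : Fin n → ℕ, y = ∑ i, (c i : ℝ) * x i) ∧
               (∃ c : Fin n → ℕ, 1 - y = ∑ i, (c i : ℝ) * x i)} := by
  simpa only [zsmul_eq_mul, nsmul_eq_mul] using
    stmt_7_general (hli.restrict_scalars' ℤ) (h1.trans (by simp only [nsmul_eq_mul]))
end
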